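/- Let k ≥ 3, d ≥ 2 with (d-1) | (k-2), and n = 2k - 2 + (k-2)/(d-1). Partition {k+1, ..., n} into d equal parts A_1, ..., A_d and set B_i = {2, ..., k} ∪ A_i. Let F consist of all k-element subsets of [n] containing the element 1, together with B_1, ..., B_d. Then F is intersecting, any two distinct members of F intersect in at most k-1 elements, every member has size between k and s = k - 1 + (k-2)/(d-1), and |F| = C(n-1, k-1) + d > C(n-1, k-1). -/

import Mathlib

open Finset

/-!
Two `k`-sets through `1` share `1`, and `B_i ∩ B_j = {2, …, k}` for `i ≠ j`, so only a `k`-set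
`X ∋ 1` against some `B_i` needs an argument. They meet because `|X| + |B_i| = n + 1`, and they meet
in fewer than `k` elements because `1 ∉ B_i`. The divisibility condition gives
`n - k = d (k - 2) / (d - 1)`, which makes each petal `A_i` have exactly the size this count needs.
-/

section Families

variable {α ι : Type*} [DecidableEq α]

/-- The relation required of any two distinct members of the family: `X` and `Y` intersect, but in
fewer than `k` elements. -/
def MeetsInLT (k : ℕ) (X Y : Finset α) : Prop :=
  (X ∩ Y).Nonempty ∧ #(X ∩ Y) < k

instance (k : ℕ) : Std.Symm (MeetsInLT (α := α) k) where
  symm X Y h := by rwa [MeetsInLT, inter_comm Y X]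

/-- The full star: all `k`-element subsets of the ground set `V` that contain the centre `x`. -/
def starFamily (V : Finset α) (x : α) (k : ℕ) : Finset (Finset α) :=
  {X ∈ V.powersetCard k | x ∈ X}

/-- The sunflower with core `C` and petals `A i`, whose members are the sets `B_i = C ∪ A_i`. The
petals are arbitrary here; that they are disjoint is part of `IsSunflowerAvoiding`. -/
def sunflower [Fintype ι] (C : Finset α) (A : ι → Finset α) : Finset (Finset α) :=
  univ.image fun i => C ∪ A i

/-- The core `C` and the petals `A i` are pairwise disjoint subsets of the ground set `V`, none of
them containing the centre `x` of the star. -/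
structure IsSunflowerAvoiding (V : Finset α) (x : α) (C : Finset α) (A : ι → Finset α) : Prop where
  core_subset : C ⊆ V.erase x
  petal_subset : ∀ i, A i ⊆ V.erase x
  disjoint_core_petal : ∀ i, Disjoint C (A i)
  pairwise_disjoint : Pairwise (Function.onFun Disjoint A)

section Star

variable {V X Y : Finset α} {x : α} {k : ℕ}

lemma mem_starFamily : X ∈ starFamily V x k ↔ (X ⊆ V ∧ #X = k) ∧ x ∈ X := by
  rw [starFamily, mem_filter, mem_powersetCard]

lemma card_starFamily (hx : x ∈ V) (hk : 1 ≤ k) :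
    #(starFamily V x k) = (#V - 1).choose (k - 1) := by
  simpa only [starFamily, singleton_subset_iff, card_singleton] using
    card_filter_powersetCard_subset {x} V k (singleton_subset_iff.mpr hx) hk

lemma card_inter_lt_of_ne_of_card_le (hne : X ≠ Y) (hcard : #Y ≤ #X) : #(X ∩ Y) < #X :=
  card_lt_card <| inf_lt_left.mpr fun hXY => hne (eq_of_subset_of_card_le hXY hcard)

lemma pairwise_meetsInLT_starFamily :
    (starFamily V x k : Set (Finset α)).Pairwise (MeetsInLT k) := by
  intro X hX Y hY hne
  obtain ⟨⟨-, hXk⟩, hxX⟩ := mem_starFamily.mp hX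
  obtain ⟨⟨-, hYk⟩, hxY⟩ := mem_starFamily.mp hY
  refine ⟨⟨x, mem_inter.mpr ⟨hxX, hxY⟩⟩, ?_⟩
  simpa only [hXk] using card_inter_lt_of_ne_of_card_le hne (hYk.trans hXk.symm).le

lemma meetsInLT_of_mem_starFamily (hX : X ∈ starFamily V x k) (hY : Y ⊆ V.erase x)
    (hcard : #V < k + #Y) : MeetsInLT k X Y := by
  obtain ⟨⟨hXV, rfl⟩, hxX⟩ := mem_starFamily.mp hX
  have hxY : x ∉ Y := fun hxY => notMem_erase x V (hY hxY)
  exact ⟨inter_nonempty_of_card_lt_card_add_card hXV (hY.trans (erase_subset x V)) hcard,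
    card_lt_card <| inf_lt_left.mpr fun hXY => hxY (hXY hxX)⟩

end Star

namespace IsSunflowerAvoiding

variable {V C : Finset α} {x : α} {A : ι → Finset α}

lemma union_subset_erase (h : IsSunflowerAvoiding V x C A) (i : ι) : C ∪ A i ⊆ V.erase x :=
  union_subset h.core_subset (h.petal_subset i)

lemma card_union (h : IsSunflowerAvoiding V x C A) (i : ι) : #(C ∪ A i) = #C + #(A i) :=
  card_union_of_disjoint (h.disjoint_core_petal i)

lemma union_inter_union (h : IsSunflowerAvoiding V x C A) {i j : ι} (hij : i ≠ j) :
    (C ∪ A i) ∩ (C ∪ A j) = C := by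
  rw [← union_inter_distrib_left, disjoint_iff_inter_eq_empty.mp (h.pairwise_disjoint hij),
    union_empty]

lemma union_injective (h : IsSunflowerAvoiding V x C A) (hne : ∀ i, (A i).Nonempty) :
    Function.Injective fun i => C ∪ A i := by
  intro i j (hij : C ∪ A i = C ∪ A j)
  by_contra hne_ij
  have hcore : C ∪ A i = C := by
    simpa only [← hij, inter_self] using h.union_inter_union hne_ij
  have hpetal : A i ⊆ C := union_eq_left.mp hcore
  exact (hne i).ne_empty ((h.disjoint_core_petal i).eq_bot_of_ge hpetal)

variable [Fintype ι]

lemma card_sunflower (h : IsSunflowerAvoiding V x C A) (hne : ∀ i, (A i).Nonempty) :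
    #(sunflower C A) = Fintype.card ι := by
  rw [sunflower, card_image_of_injective _ (h.union_injective hne), card_univ]

lemma disjoint_starFamily_sunflower (h : IsSunflowerAvoiding V x C A) (k : ℕ) :
    Disjoint (starFamily V x k) (sunflower C A) := by
  simp only [sunflower, disjoint_right, forall_mem_image]
  intro i _ hi
  exact notMem_erase x V (h.union_subset_erase i (mem_starFamily.mp hi).2)

lemma pairwise_meetsInLT_sunflower (h : IsSunflowerAvoiding V x C A) (hC : C.Nonempty) {k : ℕ}
    (hCk : #C < k) : (sunflower C A : Set (Finset α)).Pairwise (MeetsInLT k) := by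
  simp only [Set.Pairwise, sunflower, mem_coe, forall_mem_image]
  intro i _ j _ hne
  rw [MeetsInLT, h.union_inter_union (ne_of_apply_ne (C ∪ A ·) hne)]
  exact ⟨hC, hCk⟩

lemma pairwise_meetsInLT_union (h : IsSunflowerAvoiding V x C A) (hC : C.Nonempty) {k : ℕ}
    (hCk : #C < k) (hV : ∀ i, #V < k + #(C ∪ A i)) :
    (↑(starFamily V x k ∪ sunflower C A) : Set (Finset α)).Pairwise (MeetsInLT k) := by
  rw [coe_union, Set.pairwise_union_of_symm]
  refine ⟨pairwise_meetsInLT_starFamily, h.pairwise_meetsInLT_sunflower hC hCk, ?_⟩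
  simp only [sunflower, mem_coe, forall_mem_image]
  exact fun X hX i _ _ => meetsInLT_of_mem_starFamily hX (h.union_subset_erase i) (hV i)

lemma card_mem_Icc_of_mem_union (h : IsSunflowerAvoiding V x C A) (hne : ∀ i, (A i).Nonempty)
    {q : ℕ} (hq : 0 < q) (hAq : ∀ i, #(A i) ≤ q) {X : Finset α}
    (hX : X ∈ starFamily V x (#C + 1) ∪ sunflower C A) : #X ∈ Set.Icc (#C + 1) (#C + q) := by
  rcases mem_union.mp hX with hstar | hsun
  · rw [(mem_starFamily.mp hstar).1.2]
    exact ⟨le_rfl, Nat.add_le_add_left hq _⟩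
  · obtain ⟨i, -, rfl⟩ := mem_image.mp hsun
    rw [h.card_union]
    exact ⟨Nat.add_le_add_left (hne i).card_pos _, Nat.add_le_add_left (hAq i) _⟩

end IsSunflowerAvoiding

theorem stmt_19_general [Fintype ι] {V C : Finset α} {x : α} {A : ι → Finset α} {k q : ℕ}
    (h : IsSunflowerAvoiding V x C A) (hx : x ∈ V) (hC : C.Nonempty) (hk : #C + 1 = k)
    (hne : ∀ i, (A i).Nonempty) (hq : 0 < q) (hAq : ∀ i, #(A i) ≤ q)
    (hV : ∀ i, #V < k + #(C ∪ A i)) :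
    (∀ X ∈ starFamily V x k ∪ sunflower C A, ∀ Y ∈ starFamily V x k ∪ sunflower C A, X ≠ Y →
      (X ∩ Y).Nonempty ∧ #(X ∩ Y) ≤ k - 1) ∧
    (∀ X ∈ starFamily V x k ∪ sunflower C A, k ≤ #X ∧ #X ≤ k - 1 + q) ∧
    #(starFamily V x k ∪ sunflower C A) = (#V - 1).choose (k - 1) + Fintype.card ι := by
  subst hk
  refine ⟨fun X hX Y hY hXY => ?_, fun X hX => h.card_mem_Icc_of_mem_union hne hq hAq hX, ?_⟩
  · have hmeet := h.pairwise_meetsInLT_union hC (Nat.lt_succ_self _) hV hX hY hXY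
    exact hmeet.imp_right Nat.le_of_lt_succ
  · rw [card_union_of_disjoint (h.disjoint_starFamily_sunflower _),
      card_starFamily hx (Nat.succ_pos _), h.card_sunflower hne]

end Families

lemma isSunflowerAvoiding_Icc {ι : Type*} {k n : ℕ} (hk : 1 ≤ k) (hkn : k ≤ n) {A : ι → Finset ℕ}
    (hA : ∀ i, A i ⊆ Icc (k + 1) n) (hdisj : ∀ i j, i ≠ j → Disjoint (A i) (A j)) :
    IsSunflowerAvoiding (Icc 1 n) 1 (Icc 2 k) A where
  core_subset a ha := by
    simp only [mem_erase, mem_Icc] at ha ⊢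
    omega
  petal_subset i a ha := by
    have := hA i ha
    simp only [mem_erase, mem_Icc] at this ⊢
    omega
  disjoint_core_petal i := disjoint_left.mpr fun a ha hai => by
    have := hA i hai
    simp only [mem_Icc] at ha this
    omega
  pairwise_disjoint := hdisj

lemma add_div_pred_div_eq_div_pred {m d : ℕ} (hd : 1 ≤ d) (hdvd : d - 1 ∣ m) :
    (m + m / (d - 1)) / d = m / (d - 1) := by
  obtain ⟨e, rfl⟩ := Nat.exists_eq_add_of_le' hd
  rw [Nat.add_sub_cancel] at hdvd ⊢
  calc (m + m / e) / (e + 1) = (e + 1) * (m / e) / (e + 1) := by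
        rw [Nat.succ_mul, Nat.mul_div_cancel' hdvd]
    _ = m / e := Nat.mul_div_cancel_left _ e.succ_pos

theorem stmt_19 (k d n : ℕ) (hk : 3 ≤ k) (hd : 2 ≤ d)
    (hdvd : (d - 1) ∣ (k - 2)) (hn : n = 2 * k - 2 + (k - 2) / (d - 1))
    (A : Fin d → Finset ℕ)
    (hdisj : ∀ i j : Fin d, i ≠ j → Disjoint (A i) (A j))
    (hunion : (Finset.univ : Finset (Fin d)).biUnion A = Finset.Icc (k + 1) n)
    (hcard : ∀ i : Fin d, (A i).card = (n - k) / d)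
    (B : Fin d → Finset ℕ) (hB : ∀ i, B i = Finset.Icc 2 k ∪ A i)
    (F : Finset (Finset ℕ))
    (hFdef : F = ((Finset.Icc 1 n).powersetCard k).filter (fun S => 1 ∈ S) ∪
      Finset.image B Finset.univ) :
    (∀ X ∈ F, ∀ Y ∈ F, X ≠ Y →
      (X ∩ Y).Nonempty ∧ (X ∩ Y).card ≤ k - 1) ∧
    (∀ X ∈ F, k ≤ X.card ∧ X.card ≤ k - 1 + (k - 2) / (d - 1)) ∧
    F.card = Nat.choose (n - 1) (k - 1) + d ∧
    F.card > Nat.choose (n - 1) (k - 1) := by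
  have hq : 0 < (k - 2) / (d - 1) :=
    Nat.div_pos (Nat.le_of_dvd (by omega) hdvd) (by omega)
  have hnk : n - k = k - 2 + (k - 2) / (d - 1) := by omega
  have hAq (i : Fin d) : #(A i) = (k - 2) / (d - 1) := by
    rw [hcard, hnk, add_div_pred_div_eq_div_pred (by omega) hdvd]
  have hA (i : Fin d) : A i ⊆ Icc (k + 1) n := hunion ▸ subset_biUnion_of_mem A (mem_univ i)
  have hsun : IsSunflowerAvoiding (Icc 1 n) 1 (Icc 2 k) A :=
    isSunflowerAvoiding_Icc (by omega) (by omega) hA hdisj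
  have hV (i : Fin d) : #(Icc 1 n) < k + #(Icc 2 k ∪ A i) := by
    rw [hsun.card_union, hAq, Nat.card_Icc, Nat.card_Icc]
    omega
  have hF : F = starFamily (Icc 1 n) 1 k ∪ sunflower (Icc 2 k) A := by
    rw [hFdef, funext hB, starFamily, sunflower]
  obtain ⟨hmeet, hsize, hcardF⟩ := stmt_19_general hsun (mem_Icc.mpr (by omega))
    (nonempty_Icc.mpr (by omega)) (by rw [Nat.card_Icc]; omega)
    (fun i => card_pos.mp (hAq i ▸ hq)) hq (fun i => (hAq i).le) hV
  rw [← hF, Nat.card_Icc, Nat.add_sub_cancel, Fintype.card_fin] at hcardF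
  exact ⟨hF ▸ hmeet, hF ▸ hsize, hcardF, by omega⟩
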